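/- Let d ≥ 1, let H = ℂ^d, and let r be a natural number. For each permutation σ of {1,…,r}, let θ(σ) denote the ℂ-linear automorphism of H^{⊗r} that permutes the tensor factors according to σ. If t : H^{⊗r} → H^{⊗r} is a ℂ-linear map such that u^{⊗r} ∘ t = t ∘ u^{⊗r} for every unitary operator u on H, then t lies in the ℂ-linear span of the operators {θ(σ) : σ a permutation of {1,…,r}}. -/

import Mathlib

open scoped TensorProduct

/-!
By Maschke's theorem and Jacobson density, `t` lies in the span of the `θ(σ)` as soon as it
commutes with every operator `s` that commutes with all `θ(σ)`. Such an `s` equals its own average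
over conjugation by the `θ(σ)`. Since the operators `b₁ ⊗ ⋯ ⊗ bᵣ` span the endomorphisms of
`H^{⊗r}`, polarization then shows that `s` is a linear combination of powers `a^{⊗r}`, so it is
enough that `t` commutes with every `a^{⊗r}`.

Unitary `a` suffice because the unitary group is Zariski dense: in an orthonormal eigenbasis
`a^{⊗r}` is polynomial in the eigenvalues of `a`, and a polynomial condition satisfied by unit
complex numbers is satisfied by all complex numbers, so it passes from unitary to self-adjoint
operators. Finally `x A + y B` with `A`, `B` self-adjoint is self-adjoint for real `x`, `y`, so the
condition extends to all complex `x`, `y`, in particular to `A + i B`.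
-/

namespace SchurWeyl

section Multilinear

variable {ι R E F : Type*}

theorem sum_perm_map_comp_eq_sum_finset [Fintype ι] [DecidableEq ι] [CommSemiring R]
    [AddCommMonoid E] [Module R E] [AddCommGroup F] [Module R F]
    (M : MultilinearMap R (fun _ : ι => E) F) (b : ι → E) :
    ∑ σ : Equiv.Perm ι, M (b ∘ σ) =
      ∑ s : Finset ι, (-1 : ℤ) ^ s.card • M fun _ => ∑ i ∈ sᶜ, b i := by
  -- Permutations are the maps `ι → ι` that avoid no value: apply inclusion-exclusion.
  let avoiding (i : ι) : Finset (ι → ι) := {f | ∀ j, f j ≠ i}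
  have sum_avoiding (s : Finset ι) :
      ∑ f ∈ s.inf avoiding, M (b ∘ f) = M fun _ => ∑ i ∈ sᶜ, b i := by
    rw [M.map_sum_finset]
    refine Finset.sum_congr ?_ fun _ _ => rfl
    ext f
    simp only [avoiding, Finset.mem_inf, Finset.mem_filter_univ, Fintype.mem_piFinset,
      Finset.mem_compl]
    grind
  have surjective_iff (f : ι → ι) :
      f ∈ Finset.univ.inf (fun i => (avoiding i)ᶜ) ↔ f.Surjective := by
    simp [avoiding, Finset.mem_inf, Function.Surjective]
  calc ∑ σ : Equiv.Perm ι, M (b ∘ σ)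
      = ∑ f ∈ Finset.univ.inf (fun i => (avoiding i)ᶜ), M (b ∘ f) :=
        Finset.sum_bij (fun σ _ => ⇑σ) (fun σ _ => (surjective_iff σ).2 σ.surjective)
          (fun _ _ _ _ h => DFunLike.coe_injective h)
          (fun f hf => ⟨.ofBijective f ((surjective_iff f).1 hf).bijective_of_finite,
            Finset.mem_univ _, rfl⟩)
          fun _ _ => rfl
    _ = _ := by
      rw [Finset.inclusion_exclusion_sum_inf_compl, Finset.powerset_univ]
      simp only [sum_avoiding]

theorem exists_mvPolynomial_eval_eq_map_const {κ : Type*} [Finite ι] [Finite κ]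
    [CommSemiring R] [AddCommMonoid E] [Module R E] (M : MultilinearMap R (fun _ : ι => E) R)
    (L : (κ → R) →ₗ[R] E) :
    ∃ p : MvPolynomial κ R, ∀ z, MvPolynomial.eval z p = M fun _ => L z := by
  classical
  have := Fintype.ofFinite ι
  have := Fintype.ofFinite κ
  refine ⟨∑ f : ι → κ, (∏ j, .X (f j)) * .C (M fun j => L (Pi.single (f j) 1)), fun z => ?_⟩
  have hz : L z = ∑ k, z k • L (Pi.single k 1) := by
    conv_lhs => rw [pi_eq_sum_univ' z, map_sum]
    simp only [map_smul]
  rw [hz, M.map_sum]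
  simp [M.map_smul_univ]

theorem map_const_mem_of_infinite_box {κ K : Type*} [Finite ι] [Finite κ] [Field K]
    [AddCommGroup E] [Module K E] [AddCommGroup F] [Module K F]
    (M : MultilinearMap K (fun _ : ι => E) F) (L : (κ → K) →ₗ[K] E)
    {S : Set K} (hS : S.Infinite) {P : Submodule K F}
    (hP : ∀ z : κ → K, (∀ k, z k ∈ S) → (M fun _ => L z) ∈ P) (z : κ → K) :
    (M fun _ => L z) ∈ P := by
  by_contra hz
  obtain ⟨φ, hφz, hφP⟩ := P.exists_le_ker_of_notMem hz
  obtain ⟨p, hp⟩ := exists_mvPolynomial_eval_eq_map_const (φ.compMultilinearMap M) L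
  have p_eq_zero : p = 0 := MvPolynomial.funext_set (fun _ => S) (fun _ => hS) fun w hw => by
    rw [hp, map_zero]
    exact hφP (hP w fun k => hw k trivial)
  exact hφz (by simpa [p_eq_zero] using (hp z).symm)

end Multilinear

theorem asAlgebraHom_mem_span_range {R G V : Type*} [CommSemiring R] [Monoid G] [AddCommMonoid V]
    [Module R V] (ρ : Representation R G V) (a : MonoidAlgebra R G) :
    ρ.asAlgebraHom a ∈ Submodule.span R (Set.range ρ) := by
  rw [Representation.asAlgebraHom_def, MonoidAlgebra.lift_apply]
  exact sum_mem fun g _ => Submodule.smul_mem _ _ (Submodule.subset_span ⟨g, rfl⟩)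

theorem mem_span_range_of_forall_commute {K G V : Type*} [Field K] [Group G] [Finite G]
    [NeZero (Nat.card G : K)] [AddCommGroup V] [Module K V] [FiniteDimensional K V]
    (ρ : Representation K G V) {t : Module.End K V}
    (ht : ∀ s : Module.End K V, (∀ g, Commute (ρ g) s) → Commute s t) :
    t ∈ Submodule.span K (Set.range ρ) := by
  have commute_of_equivariant (s : Module.End (MonoidAlgebra K G) ρ.asModule) :
      Commute (s.restrictScalars K : Module.End K V) t :=
    ht _ fun g => LinearMap.ext fun x => by
      have single_smul (y : ρ.asModule) : MonoidAlgebra.single g (1 : K) • y = ρ g y := by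
        rw [ρ.single_smul, one_smul]; rfl
      exact ((single_smul (s x)).symm.trans (s.map_smul _ x).symm).trans
        (congrArg s (single_smul x))
  let tBicommutant : Module.End (Module.End (MonoidAlgebra K G) ρ.asModule) ρ.asModule :=
    { toFun := t
      map_add' := t.map_add
      map_smul' := fun s x => (LinearMap.congr_fun (commute_of_equivariant s) x).symm }
  obtain ⟨S, hS⟩ := Module.Finite.fg_top (R := K) (M := V)
  obtain ⟨a, ha⟩ := jacobson_density tBicommutant S
  have t_eq : t = ρ.asAlgebraHom a := LinearMap.ext_on hS ha
  exact t_eq ▸ asAlgebraHom_mem_span_range ρ a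

section TensorPower

variable {ι : Type*}

theorem span_range_map_eq_top [Finite ι] {R : Type*} [CommSemiring R] {M N : ι → Type*}
    [∀ i, AddCommMonoid (M i)] [∀ i, Module R (M i)] [∀ i, Module.Free R (M i)]
    [∀ i, Module.Finite R (M i)] [∀ i, AddCommMonoid (N i)] [∀ i, Module R (N i)] :
    Submodule.span R (Set.range fun f : ∀ i, M i →ₗ[R] N i => PiTensorProduct.map f) = ⊤ := by
  classical
  have := Fintype.ofFinite ι
  set S := Submodule.span R (Set.range fun f : ∀ i, M i →ₗ[R] N i => PiTensorProduct.map f)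
  let b (i : ι) := Module.Free.chooseBasis R (M i)
  let B := Basis.piTensorProduct b
  have map_smulRight (p : ∀ i, Module.Free.ChooseBasisIndex R (M i)) (y : ∀ i, N i) :
      (PiTensorProduct.map fun i => ((b i).coord (p i)).smulRight (y i)) =
        (B.coord p).smulRight (PiTensorProduct.tprod R y) := by
    ext x
    simp [B, MultilinearMap.map_smul_univ, Basis.piTensorProduct_repr_tprod_apply]
  have smulRight_mem (p : ∀ i, Module.Free.ChooseBasisIndex R (M i)) (y : ⨂[R] i, N i) :
      (B.coord p).smulRight y ∈ S := by
    have span_le : Submodule.span R (Set.range (PiTensorProduct.tprod R)) ≤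
        S.comap (LinearMap.smulRightₗ (B.coord p)) := by
      rw [Submodule.span_le, Set.range_subset_iff]
      exact fun n => Submodule.subset_span ⟨_, map_smulRight p n⟩
    exact span_le (PiTensorProduct.span_tprod_eq_top.ge trivial)
  refine eq_top_iff.2 fun s _ => ?_
  have s_eq : s = ∑ p, (B.coord p).smulRight (s (B p)) :=
    B.ext fun q => by simp [LinearMap.sum_apply, Finsupp.single_apply]
  exact s_eq ▸ sum_mem fun p _ => smulRight_mem p _

section PermRep

variable (ι) (R V : Type*) [CommSemiring R] [AddCommMonoid V] [Module R V]

/-- The representation of the symmetric group on the tensor power `V^{⊗ι}` by permutation of the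
tensor factors; `permRep ι R V σ` is the operator `θ(σ)`, which moves the `i`-th factor to
position `σ i`. -/
noncomputable def permRep : Representation R (Equiv.Perm ι) (⨂[R] _ : ι, V) where
  toFun σ := (PiTensorProduct.reindex R (fun _ : ι => V) σ).toLinearMap
  map_one' := by
    ext x
    simp [Equiv.Perm.one_def]
  map_mul' σ τ := by
    ext x
    simp only [Equiv.Perm.mul_def, LinearMap.compMultilinearMap_apply, LinearEquiv.coe_coe,
      PiTensorProduct.reindex_tprod, Module.End.mul_apply]
    rfl

variable {ι R V}

theorem permRep_tprod (σ : Equiv.Perm ι) (x : ι → V) :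
    permRep ι R V σ (PiTensorProduct.tprod R x) = PiTensorProduct.tprod R (x ∘ σ.symm) :=
  PiTensorProduct.reindex_tprod σ x

theorem permRep_inv_mul_map_mul_permRep (σ : Equiv.Perm ι) (b : ι → Module.End R V) :
    permRep ι R V σ⁻¹ * PiTensorProduct.map b * permRep ι R V σ =
      PiTensorProduct.map (b ∘ σ) := by
  ext x
  simp only [LinearMap.compMultilinearMap_apply, Module.End.mul_apply, permRep_tprod,
    PiTensorProduct.map_tprod]
  exact congrArg _ (funext fun i => by simp [Equiv.Perm.inv_def])

end PermRep

theorem sum_perm_map_comp_mem_span_range_map_const [Fintype ι] [DecidableEq ι] {R V : Type*}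
    [CommRing R] [AddCommGroup V] [Module R V] (b : ι → Module.End R V) :
    ∑ σ : Equiv.Perm ι, PiTensorProduct.map (b ∘ σ) ∈ Submodule.span R
      (Set.range fun a : Module.End R V => PiTensorProduct.map fun _ : ι => a) := by
  have polarization := sum_perm_map_comp_eq_sum_finset
    (PiTensorProduct.mapMultilinear R (fun _ : ι => V) fun _ => V) b
  simp only [PiTensorProduct.mapMultilinear_apply] at polarization
  rw [polarization]
  exact sum_mem fun s _ => zsmul_mem (Submodule.subset_span (Set.mem_range_self _)) _

variable {K V : Type*} [Finite ι] [Field K] [NeZero (Nat.card (Equiv.Perm ι) : K)]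
  [AddCommGroup V] [Module K V] [FiniteDimensional K V]

theorem mem_span_range_map_const_of_forall_commute_permRep {s : Module.End K (⨂[K] _ : ι, V)}
    (hs : ∀ σ, Commute (permRep ι K V σ) s) :
    s ∈ Submodule.span K
      (Set.range fun a : Module.End K V => PiTensorProduct.map fun _ : ι => a) := by
  classical
  have := Fintype.ofFinite ι
  set S := Submodule.span K
    (Set.range fun a : Module.End K V => PiTensorProduct.map fun _ : ι => a)
  let symmetrize : Module.End K (⨂[K] _ : ι, V) →ₗ[K] Module.End K (⨂[K] _ : ι, V) :=
    ∑ σ, LinearMap.mulLeftRight K (permRep ι K V σ⁻¹, permRep ι K V σ)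
  have symmetrize_apply (f) :
      symmetrize f = ∑ σ, permRep ι K V σ⁻¹ * f * permRep ι K V σ := by
    simp [symmetrize, LinearMap.sum_apply]
  have symmetrize_mem (f) : symmetrize f ∈ S := by
    have top_le : ⊤ ≤ S.comap symmetrize := by
      rw [← span_range_map_eq_top, Submodule.span_le, Set.range_subset_iff]
      intro b
      simpa only [SetLike.mem_coe, Submodule.mem_comap, symmetrize_apply,
        permRep_inv_mul_map_mul_permRep] using sum_perm_map_comp_mem_span_range_map_const b
    exact top_le trivial
  have symmetrize_self : symmetrize s = (Nat.card (Equiv.Perm ι) : K) • s := by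
    have conj_eq (σ) : permRep ι K V σ⁻¹ * s * permRep ι K V σ = s := by
      rw [mul_assoc, ← hs σ, ← mul_assoc, ← map_mul, inv_mul_cancel, map_one, one_mul]
    simp [symmetrize_apply, conj_eq, Nat.cast_smul_eq_nsmul, ← Nat.card_eq_fintype_card]
  exact (S.smul_mem_iff (NeZero.ne _)).1 (symmetrize_self ▸ symmetrize_mem s)

theorem mem_span_range_permRep_of_forall_commute_map_const {t : Module.End K (⨂[K] _ : ι, V)}
    (ht : ∀ a : Module.End K V, Commute (PiTensorProduct.map fun _ : ι => a) t) :
    t ∈ Submodule.span K (Set.range (permRep ι K V)) := by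
  refine mem_span_range_of_forall_commute _ fun s hs => ?_
  have span_le : Submodule.span K
      (Set.range fun a : Module.End K V => PiTensorProduct.map fun _ : ι => a) ≤
        (Subalgebra.centralizer K {t}).toSubmodule := by
    rw [Submodule.span_le, Set.range_subset_iff]
    rintro a _ rfl
    exact (ht a).symm
  exact (span_le (mem_span_range_map_const_of_forall_commute_permRep hs) t rfl).symm

end TensorPower

section Unitary

/-- The operator which is diagonal in the basis `b`, as a linear function of its eigenvalues. -/
noncomputable def diagonalEnd {κ R V : Type*} [Fintype κ] [DecidableEq κ] [CommSemiring R]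
    [AddCommMonoid V] [Module R V] (b : Module.Basis κ R V) : (κ → R) →ₗ[R] Module.End R V :=
  (Matrix.toLin b b).toLinearMap ∘ₗ Matrix.diagonalLinearMap κ R R

theorem diagonalEnd_apply_basis {κ R V : Type*} [Fintype κ] [DecidableEq κ] [CommSemiring R]
    [AddCommMonoid V] [Module R V] (b : Module.Basis κ R V) (z : κ → R) (k : κ) :
    diagonalEnd b z (b k) = z k • b k := by
  simp [diagonalEnd, Matrix.toLin_self, Matrix.diagonal_apply]

theorem exists_linearIsometryEquiv_eq_diagonalEnd {κ 𝕜 E : Type*} [Fintype κ] [DecidableEq κ]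
    [RCLike 𝕜] [NormedAddCommGroup E] [InnerProductSpace 𝕜 E] (e : OrthonormalBasis κ 𝕜 E)
    {z : κ → 𝕜} (hz : ∀ k, ‖z k‖ = 1) :
    ∃ u : E ≃ₗᵢ[𝕜] E, (u.toLinearEquiv : E →ₗ[𝕜] E) = diagonalEnd e.toBasis z := by
  have := e.toBasis.finiteDimensional_of_finite
  have he : Orthonormal 𝕜 e.toBasis := by simp
  have image_orthonormal : Orthonormal 𝕜 (diagonalEnd e.toBasis z ∘ e.toBasis) := by
    rw [orthonormal_iff_ite] at he ⊢
    intro i j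
    simp only [Function.comp_apply, diagonalEnd_apply_basis, inner_smul_left, inner_smul_right, he]
    split_ifs with hij
    · simp [hij, RCLike.mul_conj, hz]
    · simp
  let u : E →ₗᵢ[𝕜] E := (diagonalEnd e.toBasis z).isometryOfOrthonormal he image_orthonormal
  exact ⟨u.toLinearIsometryEquiv rfl, rfl⟩

theorem exists_eq_diagonalEnd_of_isSymmetric {𝕜 E : Type*} [RCLike 𝕜] [NormedAddCommGroup E]
    [InnerProductSpace 𝕜 E] [FiniteDimensional 𝕜 E] {T : E →ₗ[𝕜] E} (hT : T.IsSymmetric) :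
    ∃ (e : OrthonormalBasis (Fin (Module.finrank 𝕜 E)) 𝕜 E) (z : Fin (Module.finrank 𝕜 E) → 𝕜),
      T = diagonalEnd e.toBasis z := by
  let e := hT.eigenvectorBasis rfl
  refine ⟨e, fun k => hT.eigenvalues rfl k, e.toBasis.ext fun k => ?_⟩
  rw [diagonalEnd_apply_basis, OrthonormalBasis.coe_toBasis]
  exact hT.apply_eigenvectorBasis rfl k

theorem infinite_unit_sphere_complex : (Metric.sphere (0 : ℂ) 1).Infinite := by
  refine (isPreconnected_sphere (by simp) 0 1).infinite_of_nontrivial ⟨1, by simp, -1, by simp, ?_⟩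
  norm_num

variable {ι E F : Type*} [Finite ι] [NormedAddCommGroup E] [InnerProductSpace ℂ E]
  [FiniteDimensional ℂ E] [AddCommGroup F] [Module ℂ F]
  (M : MultilinearMap ℂ (fun _ : ι => E →ₗ[ℂ] E) F) {P : Submodule ℂ F}

theorem map_const_mem_of_isSymmetric
    (hP : ∀ u : E ≃ₗᵢ[ℂ] E, (M fun _ => (u.toLinearEquiv : E →ₗ[ℂ] E)) ∈ P)
    {T : E →ₗ[ℂ] E} (hT : T.IsSymmetric) : (M fun _ => T) ∈ P := by
  obtain ⟨e, z, rfl⟩ := exists_eq_diagonalEnd_of_isSymmetric hT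
  refine map_const_mem_of_infinite_box M _ infinite_unit_sphere_complex (fun w hw => ?_) z
  obtain ⟨u, hu⟩ :=
    exists_linearIsometryEquiv_eq_diagonalEnd e fun k => mem_sphere_zero_iff_norm.1 (hw k)
  exact hu ▸ hP u

open scoped ComplexStarModule in
theorem map_const_mem_of_forall_linearIsometryEquiv
    (hP : ∀ u : E ≃ₗᵢ[ℂ] E, (M fun _ => (u.toLinearEquiv : E →ₗ[ℂ] E)) ∈ P)
    (a : E →ₗ[ℂ] E) : (M fun _ => a) ∈ P := by
  let L : (Fin 2 → ℂ) →ₗ[ℂ] (E →ₗ[ℂ] E) :=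
    Fintype.linearCombination ℂ ![(ℜ a : E →ₗ[ℂ] E), (ℑ a : E →ₗ[ℂ] E)]
  have L_apply (z : Fin 2 → ℂ) : L z = z 0 • (ℜ a : E →ₗ[ℂ] E) + z 1 • (ℑ a : E →ₗ[ℂ] E) := by
    simp [L, Fintype.linearCombination_apply]
  have a_eq : a = L ![1, Complex.I] := by
    simp [L_apply, realPart_add_I_smul_imaginaryPart]
  have infinite_reals : (Set.range ((↑) : ℝ → ℂ)).Infinite :=
    Set.infinite_range_of_injective Complex.ofReal_injective
  rw [a_eq]
  refine map_const_mem_of_infinite_box M L infinite_reals (fun z hz => ?_) _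
  apply map_const_mem_of_isSymmetric M hP
  choose x hx using hz
  rw [LinearMap.isSymmetric_iff_isSelfAdjoint, L_apply, ← hx, ← hx]
  exact (IsSelfAdjoint.smul (Complex.conj_ofReal _) (ℜ a).2).add
    (IsSelfAdjoint.smul (Complex.conj_ofReal _) (ℑ a).2)

end Unitary

end SchurWeyl

theorem stmt9_general {ι E : Type*} [Finite ι] [NormedAddCommGroup E] [InnerProductSpace ℂ E]
    [FiniteDimensional ℂ E] {t : (⨂[ℂ] _ : ι, E) →ₗ[ℂ] ⨂[ℂ] _ : ι, E}
    (ht : ∀ u : E ≃ₗᵢ[ℂ] E,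
      (PiTensorProduct.map fun _ : ι => (u.toLinearEquiv : E →ₗ[ℂ] E)).comp t =
        t.comp (PiTensorProduct.map fun _ : ι => (u.toLinearEquiv : E →ₗ[ℂ] E))) :
    t ∈ Submodule.span ℂ (Set.range fun σ : Equiv.Perm ι =>
      (PiTensorProduct.reindex ℂ (fun _ : ι => E) σ).toLinearMap) := by
  refine SchurWeyl.mem_span_range_permRep_of_forall_commute_map_const fun a => ?_
  have map_const_mem_centralizer :
      (PiTensorProduct.map fun _ : ι => a) ∈ (Subalgebra.centralizer ℂ {t}).toSubmodule := by
    refine SchurWeyl.map_const_mem_of_forall_linearIsometryEquiv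
      (PiTensorProduct.mapMultilinear ℂ (fun _ : ι => E) fun _ => E) ?_ a
    rintro u _ rfl
    exact (ht u).symm
  exact (map_const_mem_centralizer t rfl).symm

/-- Let `d ≥ 1`, `H = ℂ^d`, `r ∈ ℕ`, and for `σ ∈ S_r` let `θ(σ)` be the linear
automorphism of `H^{⊗r}` permuting the tensor factors according to `σ`.  If a `ℂ`-linear map
`t : H^{⊗r} → H^{⊗r}` commutes with `u^{⊗r}` for every unitary `u` on `H`, then `t` lies in
the `ℂ`-linear span of `{θ(σ) : σ ∈ S_r}`. -/
theorem stmt9 (d : ℕ) (hd : 1 ≤ d) (r : ℕ)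
    (t : (⨂[ℂ] _ : Fin r, EuclideanSpace ℂ (Fin d)) →ₗ[ℂ]
         ⨂[ℂ] _ : Fin r, EuclideanSpace ℂ (Fin d))
    (ht : ∀ u : EuclideanSpace ℂ (Fin d) ≃ₗᵢ[ℂ] EuclideanSpace ℂ (Fin d),
      (PiTensorProduct.map fun _ : Fin r =>
          (u.toLinearEquiv : EuclideanSpace ℂ (Fin d) →ₗ[ℂ] EuclideanSpace ℂ (Fin d))).comp t =
        t.comp (PiTensorProduct.map fun _ : Fin r =>
          (u.toLinearEquiv : EuclideanSpace ℂ (Fin d) →ₗ[ℂ] EuclideanSpace ℂ (Fin d)))) :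
    t ∈ Submodule.span ℂ
      (Set.range fun σ : Equiv.Perm (Fin r) =>
        ((PiTensorProduct.reindex ℂ (fun _ : Fin r => EuclideanSpace ℂ (Fin d)) σ).toLinearMap :
          (⨂[ℂ] _ : Fin r, EuclideanSpace ℂ (Fin d)) →ₗ[ℂ]
          ⨂[ℂ] _ : Fin r, EuclideanSpace ℂ (Fin d))) :=
  stmt9_general ht
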